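/- Let a_n^{(k)}(x) + x·b_n^{(k)}(x) be the symmetric decomposition of A_n^{(k)}(x). Then a_n^{(k)}(x) = Σ_{π ∈ Q̄_n(k)} x^{ap(π)} and x·b_n^{(k)}(x) = Σ_{π ∈ Q̂_n(k)} x^{ap(π)}, where Q̄_n(k) is the set of k-Stirling permutations of order n whose first k letters are equal and Q̂_n(k) is its complement in Q_n(k). -/

import Mathlib

open Polynomial
open scoped Classical

noncomputable section

/-- Number of longest ascent-plateaux of the length-`L` word `v` (values in `ℕ`):
indices `i` with `v i < v (i+1) = v (i+2) = ⋯ = v (i+k)`. -/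
def apWord (k L : ℕ) (v : ℕ → ℕ) : ℕ :=
  ((Finset.range L).filter fun i =>
    i + k < L ∧ v i < v (i + 1) ∧ ∀ j < k, v (i + 1 + j) = v (i + 1)).card

/-- `w : Fin (k*n) → Fin n` is a `k`-Stirling permutation of order `n`: every letter
occurs exactly `k` times and letters lying between two equal letters are at least as
large. -/
def IsKStirling (k n : ℕ) (w : Fin (k * n) → Fin n) : Prop :=
  (∀ m : Fin n, (Finset.univ.filter fun i => w i = m).card = k) ∧
  (∀ i j l : Fin (k * n), i ≤ j → j ≤ l → w i = w l → w i ≤ w j)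

/-- The word (with values in `{1,…,n}` and junk value `0` out of range) associated to a
`k`-Stirling permutation. -/
def wordOf (k n : ℕ) (w : Fin (k * n) → Fin n) : ℕ → ℕ :=
  fun i => if h : i < k * n then (w ⟨i, h⟩ : ℕ) + 1 else 0

/-- The number `ap(π)` of longest ascent-plateaux of a `k`-Stirling permutation. -/
def apStat (k n : ℕ) (w : Fin (k * n) → Fin n) : ℕ :=
  apWord k (k * n) (wordOf k n w)

/-- The number `lap(π)` of left longest ascent-plateaux: longest ascent-plateaux of the
word `0π` obtained by prepending a zero. -/
def lapStat (k n : ℕ) (w : Fin (k * n) → Fin n) : ℕ :=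
  apWord k (k * n + 1) (fun i => if i = 0 then 0 else wordOf k n w (i - 1))

/-- `π ∈ Q̄_n(k)`: the first `k` letters of the `k`-Stirling permutation are equal. -/
def FirstPlateau (k n : ℕ) (w : Fin (k * n) → Fin n) : Prop :=
  ∀ i : Fin (k * n), (i : ℕ) < k → ∀ h0 : 0 < k * n, w i = w ⟨0, h0⟩

/-!
Write `P` and `Q` for the sums of `x ^ ap(π)` over `Q̄_n(k)` and `Q̂_n(k)`. Prepending `0` to `π`
creates one new longest ascent-plateau exactly when `π ∈ Q̄_n(k)`, so the generating polynomial of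
`lap` is `x P + Q`. Every word of order `n + 1` arises exactly once by inserting a block of `k`
letters `n + 1` into a word of order `n`. The block is a new plateau unless it comes first, and a
given old plateau is destroyed at exactly `k` of the available positions. Hence `lap` and `n - ap`
obey the same recurrence, which gives `x ^ n A(1/x) = x P + Q` for `A = P + Q`. Palindromicity of
`a` and `b` says `x ^ n A(1/x) = x a + x b`. Subtracting `A = a + x b` leaves
`(x - 1) a = (x - 1) P`.
-/

open scoped Finset

section Counting

variable {ι α M : Type*} [AddCommMonoid M] {s : Finset ι} {t : ι → Finset α}

lemma card_filter_notMem_add_one [DecidableEq α] (ht : (s : Set ι).PairwiseDisjoint t) {p : α}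
    (hp : p ∈ s.biUnion t) : #{i ∈ s | p ∉ t i} + 1 = #s := by
  obtain ⟨i, hi, hpi⟩ := Finset.mem_biUnion.mp hp
  have unique : {j ∈ s | p ∈ t j} = {i} := by
    ext j
    simp only [Finset.mem_filter, Finset.mem_singleton]
    refine ⟨fun ⟨hj, hpj⟩ => ?_, by rintro rfl; exact ⟨hi, hpi⟩⟩
    exact ht.elim_finset hj hi p hpj hpi
  rw [← Finset.card_filter_add_card_filter_not (s := s) (fun j => p ∈ t j), unique,
    Finset.card_singleton, add_comm]

lemma sum_card_filter_notMem_add_one [DecidableEq α] (ht : (s : Set ι).PairwiseDisjoint t)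
    {u : Finset α} (hu : s.biUnion t ⊆ u) (f : ℕ → M) :
    ∑ p ∈ u, f (#{i ∈ s | p ∉ t i} + 1) =
      (∑ i ∈ s, #(t i)) • f #s + (#u - ∑ i ∈ s, #(t i)) • f (#s + 1) := by
  have covered : ∀ p ∈ s.biUnion t, f (#{i ∈ s | p ∉ t i} + 1) = f #s := fun p hp => by
    rw [card_filter_notMem_add_one ht hp]
  have uncovered : ∀ p ∈ u \ s.biUnion t, f (#{i ∈ s | p ∉ t i} + 1) = f (#s + 1) := by
    intro p hp
    have avoids : ∀ i ∈ s, p ∉ t i := fun i hi hpi =>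
      (Finset.mem_sdiff.mp hp).2 (Finset.mem_biUnion.mpr ⟨i, hi, hpi⟩)
    rw [Finset.filter_true_of_mem avoids]
  rw [← Finset.sum_sdiff hu, Finset.sum_congr rfl covered, Finset.sum_congr rfl uncovered,
    Finset.sum_const, Finset.sum_const, Finset.card_sdiff_of_subset hu, Finset.card_biUnion ht,
    add_comm]

lemma sum_subtype_and_add_sum_subtype_and_not (p q : α → Prop) [Fintype {x // p x}]
    [Fintype {x // p x ∧ q x}] [Fintype {x // p x ∧ ¬ q x}] (f : α → M) :
    ∑ x : {x // p x ∧ q x}, f x + ∑ x : {x // p x ∧ ¬ q x}, f x = ∑ x : {x // p x}, f x := by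
  have restrict (r : α → Prop) [Fintype {x // p x ∧ r x}] :
      ∑ x : {x // p x ∧ r x}, f x = ∑ x : {x : {x // p x} // r x}, f x :=
    (Fintype.sum_equiv (Equiv.subtypeSubtypeEquivSubtypeInter p r) _ _ fun _ => rfl).symm
  rw [restrict q, restrict (¬ q ·)]
  convert Fintype.sum_subtype_add_sum_subtype (fun x : {x // p x} => q x) (fun x => f x)

lemma exists_eq_Ico_of_ordConnected {S : Set ℕ} (hS : S.OrdConnected) (hcard : S.ncard ≠ 0) :
    ∃ p, S = Set.Ico p (p + S.ncard) := by
  have hne : S.Nonempty := Set.nonempty_of_ncard_ne_zero hcard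
  have hbdd : BddAbove S := (Set.finite_of_ncard_ne_zero hcard).bddAbove
  have hIcc : S = Set.Icc (sInf S) (sSup S) := Set.Subset.antisymm
    (fun _ hi => ⟨Nat.sInf_le hi, le_csSup hbdd hi⟩)
    (hS.out (Nat.sInf_mem hne) (Nat.sSup_mem hne hbdd))
  have hncard : S.ncard = sSup S + 1 - sInf S := by
    conv_lhs => rw [hIcc, ← Finset.coe_Icc, Set.ncard_coe_finset, Nat.card_Icc]
  refine ⟨sInf S, hIcc.trans (Set.ext fun i => ?_)⟩
  simp only [Set.mem_Icc, Set.mem_Ico]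
  omega

end Counting

section Plateaux

variable {k L i : ℕ} {v : ℕ → ℕ}

/-- The longest ascent-plateaux of the length-`L` word `v`, indexed by the letter before the
plateau, so that the plateau at `i` occupies the positions `i + 1, …, i + k`. -/
def plateaux (k L : ℕ) (v : ℕ → ℕ) : Finset ℕ :=
  {i ∈ Finset.range L | i + k < L ∧ v i < v (i + 1) ∧ ∀ j < k, v (i + 1 + j) = v (i + 1)}

lemma card_plateaux : #(plateaux k L v) = apWord k L v := rfl

lemma mem_plateaux :
    i ∈ plateaux k L v ↔
      i + k < L ∧ v i < v (i + 1) ∧ ∀ j < k, v (i + 1 + j) = v (i + 1) := by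
  simp only [plateaux, Finset.mem_filter, Finset.mem_range, and_iff_right_iff_imp]
  omega

lemma add_le_of_mem_plateaux {i' : ℕ} (hi : i ∈ plateaux k L v) (hi' : i' ∈ plateaux k L v)
    (hlt : i < i') : i + k ≤ i' := by
  obtain ⟨-, -, hconst⟩ := mem_plateaux.mp hi
  obtain ⟨-, hasc, -⟩ := mem_plateaux.mp hi'
  by_contra! hoverlap
  have before := hconst (i' - (i + 1)) (by omega)
  have after := hconst (i' - i) (by omega)
  rw [show i + 1 + (i' - (i + 1)) = i' by omega] at before
  rw [show i + 1 + (i' - i) = i' + 1 by omega] at after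
  omega

lemma pairwiseDisjoint_plateaux :
    (plateaux k L v : Set ℕ).PairwiseDisjoint fun i => Finset.Ico i (i + k) := by
  intro i hi i' hi' hne
  rw [Function.onFun, Finset.disjoint_left]
  intro a ha ha'
  rw [Finset.mem_Ico] at ha ha'
  rcases hne.lt_or_gt with h | h
  · have := add_le_of_mem_plateaux hi hi' h
    omega
  · have := add_le_of_mem_plateaux hi' hi h
    omega

lemma biUnion_plateaux_subset :
    ((plateaux k L v).biUnion fun i => Finset.Ico i (i + k)) ⊆ Finset.range (L - 1) := by
  intro a ha
  obtain ⟨i, hi, hai⟩ := Finset.mem_biUnion.mp ha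
  have := (mem_plateaux.mp hi).1
  rw [Finset.mem_Ico] at hai
  rw [Finset.mem_range]
  omega

lemma sum_card_Ico_plateaux : ∑ i ∈ plateaux k L v, #(Finset.Ico i (i + k)) = k * apWord k L v := by
  simp only [Nat.card_Ico, Nat.add_sub_cancel_left, Finset.sum_const, smul_eq_mul, card_plateaux,
    mul_comm]

lemma mul_apWord_le : k * apWord k L v ≤ L - 1 := by
  have := Finset.card_le_card (biUnion_plateaux_subset (k := k) (L := L) (v := v))
  rwa [Finset.card_biUnion pairwiseDisjoint_plateaux, sum_card_Ico_plateaux,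
    Finset.card_range] at this

lemma apWord_le_sub_one {n : ℕ} (hk : 1 ≤ k) : apWord k (k * n) v ≤ n - 1 := by
  have hle : k * apWord k (k * n) v ≤ k * n - 1 := mul_apWord_le
  rcases n.eq_zero_or_pos with rfl | hn
  · simpa [show k ≠ 0 by omega] using hle
  · have hlt : k * apWord k (k * n) v < k * n := by
      have := Nat.mul_pos hk hn
      omega
    have := Nat.lt_of_mul_lt_mul_left hlt
    omega

end Plateaux

section InsertBlock

variable {k N p i : ℕ} {v : ℕ → ℕ}

/-- The word obtained from `v` by inserting `k` copies of the letter `N` in front of position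
`p`. -/
def insertBlock (k N p : ℕ) (v : ℕ → ℕ) : ℕ → ℕ :=
  fun i => if i < p then v i else if i < p + k then N else v (i - k)

/-- The position which the letter at a given position of a word moves to when a block of `k`
letters is inserted in front of position `p`. -/
def blockShift (k p : ℕ) : ℕ ↪o ℕ :=
  OrderEmbedding.ofStrictMono (fun i => if i < p then i else i + k) fun i j hij => by
    dsimp only
    split_ifs <;> omega

lemma blockShift_of_lt (h : i < p) : blockShift k p i = i := if_pos h

lemma blockShift_of_le (h : p ≤ i) : blockShift k p i = i + k := if_neg h.not_gt

lemma blockShift_lt_add_iff {L : ℕ} (hp : p ≤ L) : blockShift k p i < L + k ↔ i < L := by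
  rcases lt_or_ge i p with h | h
  · rw [blockShift_of_lt h]
    omega
  · rw [blockShift_of_le h]
    omega

lemma blockShift_notMem_Ico : blockShift k p i ∉ Set.Ico p (p + k) := by
  rw [Set.mem_Ico]
  rcases lt_or_ge i p with h | h
  · rw [blockShift_of_lt h]
    omega
  · rw [blockShift_of_le h]
    omega

lemma mem_range_blockShift : i ∈ Set.range (blockShift k p) ↔ i ∉ Set.Ico p (p + k) := by
  refine ⟨by rintro ⟨a, rfl⟩; exact blockShift_notMem_Ico, fun h => ?_⟩
  rw [Set.mem_Ico] at h
  rcases lt_or_ge i p with hip | hip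
  · exact ⟨i, blockShift_of_lt hip⟩
  · exact ⟨i - k, by rw [blockShift_of_le (by omega)]; omega⟩

lemma insertBlock_of_mem (h : i ∈ Set.Ico p (p + k)) : insertBlock k N p v i = N := by
  rw [insertBlock, if_neg h.1.not_gt, if_pos h.2]

lemma insertBlock_of_lt (h : i < p) : insertBlock k N p v i = v i := if_pos h

lemma insertBlock_of_le (h : p + k ≤ i) : insertBlock k N p v i = v (i - k) := by
  rw [insertBlock, if_neg (by omega), if_neg (by omega)]

lemma insertBlock_blockShift (a : ℕ) : insertBlock k N p v (blockShift k p a) = v a := by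
  rcases lt_or_ge a p with h | h
  · rw [blockShift_of_lt h, insertBlock_of_lt h]
  · rw [blockShift_of_le h, insertBlock_of_le (by omega), Nat.add_sub_cancel]

lemma insertBlock_comp_blockShift (h : ∀ i ∈ Set.Ico p (p + k), v i = N) :
    insertBlock k N p (v ∘ blockShift k p) = v := by
  funext i
  by_cases hi : i ∈ Set.Ico p (p + k)
  · rw [insertBlock_of_mem hi, h i hi]
  · obtain ⟨a, rfl⟩ := mem_range_blockShift.mpr hi
    exact insertBlock_blockShift a

lemma insertBlock_injective : Function.Injective (insertBlock k N p) := fun u v h => by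
  funext a
  rw [← insertBlock_blockShift (k := k) (N := N) (p := p) (v := u), h, insertBlock_blockShift]

lemma insertBlock_eq_iff (hv : ∀ a, v a ≠ N) :
    insertBlock k N p v i = N ↔ i ∈ Set.Ico p (p + k) := by
  refine ⟨fun h => ?_, insertBlock_of_mem⟩
  by_contra hi
  obtain ⟨a, rfl⟩ := mem_range_blockShift.mpr hi
  exact hv a ((insertBlock_blockShift a).symm.trans h)

lemma insertBlock_le (hv : ∀ a, v a ≤ N) : insertBlock k N p v i ≤ N := by
  by_cases hi : i ∈ Set.Ico p (p + k)
  · rw [insertBlock_of_mem hi]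
  · obtain ⟨a, rfl⟩ := mem_range_blockShift.mpr hi
    rw [insertBlock_blockShift]
    exact hv a

lemma setOf_insertBlock_eq {m : ℕ} (hm : m ≠ N) :
    {i | insertBlock k N p v i = m} = blockShift k p '' {a | v a = m} := by
  ext i
  refine ⟨fun (h : insertBlock k N p v i = m) => ?_, ?_⟩
  · obtain ⟨a, rfl⟩ := mem_range_blockShift.mpr
      fun hi => hm (h.symm.trans (insertBlock_of_mem hi))
    exact ⟨a, (insertBlock_blockShift a).symm.trans h, rfl⟩
  · rintro ⟨a, ha, rfl⟩
    exact (insertBlock_blockShift a).trans ha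

lemma ncard_insertBlock_eq {m : ℕ} (hm : m ≠ N) :
    {i | insertBlock k N p v i = m}.ncard = {a | v a = m}.ncard := by
  rw [setOf_insertBlock_eq hm, Set.ncard_image_of_injective _ (blockShift k p).injective]

end InsertBlock

section PlateauxInsertBlock

variable {k L N p i : ℕ} {v : ℕ → ℕ}

lemma blockShift_add {j : ℕ} (hp : p ∉ Finset.Ioc i (i + k)) (hj : j ≤ k) :
    blockShift k p i + j = blockShift k p (i + j) := by
  rw [Finset.mem_Ioc] at hp
  rcases lt_or_ge i p with h | h
  · rw [blockShift_of_lt h, blockShift_of_lt (by omega)]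
  · rw [blockShift_of_le h, blockShift_of_le (by omega)]
    omega

lemma insertBlock_blockShift_add {j : ℕ} (hp : p ∉ Finset.Ioc i (i + k)) (hj : j ≤ k) :
    insertBlock k N p v (blockShift k p i + j) = v (i + j) := by
  rw [blockShift_add hp hj, insertBlock_blockShift]

lemma blockShift_mem_plateaux_insertBlock (hk : 1 ≤ k) (hpL : p ≤ L)
    (hp : p ∉ Finset.Ioc i (i + k)) :
    blockShift k p i ∈ plateaux k (L + k) (insertBlock k N p v) ↔ i ∈ plateaux k L v := by
  have window (j : ℕ) (hj : j < k) :
      insertBlock k N p v (blockShift k p i + 1 + j) = v (i + 1 + j) := by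
    rw [add_assoc, insertBlock_blockShift_add hp (by omega), add_assoc]
  rw [mem_plateaux, mem_plateaux, blockShift_add hp le_rfl, blockShift_lt_add_iff hpL,
    insertBlock_blockShift, insertBlock_blockShift_add hp hk]
  refine and_congr_right' (and_congr_right' (forall₂_congr fun j hj => ?_))
  rw [window j hj]

lemma mem_plateaux_insertBlock_succ (hk : 1 ≤ k) (hpL : p < L) (hvp : v p < N) :
    p ∈ plateaux k (L + k) (insertBlock k N (p + 1) v) := by
  refine mem_plateaux.mpr ⟨by omega, ?_, fun j hj => ?_⟩
  · rwa [insertBlock_of_lt p.lt_succ_self, insertBlock_of_mem ⟨le_rfl, by omega⟩]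
  · rw [insertBlock_of_mem ⟨by omega, by omega⟩, insertBlock_of_mem ⟨le_rfl, by omega⟩]

lemma exists_blockShift_eq_of_mem_plateaux_insertBlock (hk : 1 ≤ k) (hpL : p ≤ L)
    (hv : ∀ a < L, v a < N) (hi : i ∈ plateaux k (L + k) (insertBlock k N p v)) (hip : i + 1 ≠ p) :
    ∃ a, p ∉ Finset.Ioc a (a + k) ∧ blockShift k p a = i := by
  obtain ⟨hlen, hasc, hconst⟩ := mem_plateaux.mp hi
  rcases lt_or_ge i p with h | h
  · refine ⟨i, fun hmem => ?_, blockShift_of_lt h⟩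
    have hpk : p ≤ i + k := (Finset.mem_Ioc.mp hmem).2
    have hNv := hconst (p - (i + 1)) (by omega)
    rw [show i + 1 + (p - (i + 1)) = p by omega,
      insertBlock_of_mem ⟨le_rfl, show p < p + k by omega⟩,
      insertBlock_of_lt (show i + 1 < p by omega)] at hNv
    have := hv (i + 1) (by omega)
    omega
  · have hik : p + k ≤ i := by
      by_contra! hlt
      rw [insertBlock_of_mem ⟨h, hlt⟩] at hasc
      rcases lt_or_ge (i + 1) (p + k) with h' | h'
      · rw [insertBlock_of_mem ⟨by omega, h'⟩] at hasc
        omega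
      · rw [insertBlock_of_le h'] at hasc
        have := hv (i + 1 - k) (by omega)
        omega
    refine ⟨i - k, ?_, by rw [blockShift_of_le (by omega)]; omega⟩
    rw [Finset.mem_Ioc]
    omega

lemma plateaux_insertBlock_zero (hk : 1 ≤ k) (hv : ∀ a < L, v a < N) :
    plateaux k (L + k) (insertBlock k N 0 v) =
      (plateaux k L v).map (blockShift k 0).toEmbedding := by
  ext i
  rw [Finset.mem_map]
  constructor
  · intro hi
    obtain ⟨a, hp, rfl⟩ :=
      exists_blockShift_eq_of_mem_plateaux_insertBlock hk L.zero_le hv hi i.succ_ne_zero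
    exact ⟨a, (blockShift_mem_plateaux_insertBlock hk L.zero_le hp).mp hi, rfl⟩
  · rintro ⟨a, ha, rfl⟩
    exact (blockShift_mem_plateaux_insertBlock hk L.zero_le (by simp)).mpr ha

lemma plateaux_insertBlock_succ (hk : 1 ≤ k) (hpL : p < L) (hv : ∀ a < L, v a < N) :
    plateaux k (L + k) (insertBlock k N (p + 1) v) =
      insert p ({i ∈ plateaux k L v | p ∉ Finset.Ico i (i + k)}.map
        (blockShift k (p + 1)).toEmbedding) := by
  have hIoc (a : ℕ) : p + 1 ∈ Finset.Ioc a (a + k) ↔ p ∈ Finset.Ico a (a + k) := by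
    rw [Finset.mem_Ioc, Finset.mem_Ico]
    omega
  ext i
  simp only [Finset.mem_insert, Finset.mem_map, Finset.mem_filter, ← hIoc]
  constructor
  · intro hi
    refine or_iff_not_imp_left.mpr fun hip => ?_
    obtain ⟨a, hp, rfl⟩ := exists_blockShift_eq_of_mem_plateaux_insertBlock hk hpL hv hi (by omega)
    exact ⟨a, ⟨(blockShift_mem_plateaux_insertBlock hk hpL hp).mp hi, hp⟩, rfl⟩
  · rintro (rfl | ⟨a, ⟨ha, hp⟩, rfl⟩)
    · exact mem_plateaux_insertBlock_succ hk hpL (hv i hpL)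
    · exact (blockShift_mem_plateaux_insertBlock hk hpL hp).mpr ha

lemma apWord_insertBlock_zero (hk : 1 ≤ k) (hv : ∀ a < L, v a < N) :
    apWord k (L + k) (insertBlock k N 0 v) = apWord k L v := by
  rw [← card_plateaux, plateaux_insertBlock_zero hk hv, Finset.card_map, card_plateaux]

lemma apWord_insertBlock_succ (hk : 1 ≤ k) (hpL : p < L) (hv : ∀ a < L, v a < N) :
    apWord k (L + k) (insertBlock k N (p + 1) v) =
      #{i ∈ plateaux k L v | p ∉ Finset.Ico i (i + k)} + 1 := by
  rw [← card_plateaux, plateaux_insertBlock_succ hk hpL hv, Finset.card_insert_of_notMem,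
    Finset.card_map]
  simp only [Finset.mem_map, Finset.mem_filter, not_exists, not_and]
  rintro a ⟨-, ha⟩ (hap : blockShift k (p + 1) a = p)
  rcases lt_or_ge a (p + 1) with h | h
  · rw [blockShift_of_lt h] at hap
    rw [Finset.mem_Ico] at ha
    omega
  · rw [blockShift_of_le h] at hap
    omega

lemma sum_apWord_insertBlock_succ {M : Type*} [AddCommMonoid M] (hk : 1 ≤ k)
    (hv : ∀ a < L, v a < N) (f : ℕ → M) :
    ∑ p ∈ Finset.range L, f (apWord k (L + k) (insertBlock k N (p + 1) v)) =
      (k * apWord k L v) • f (apWord k L v) + (L - k * apWord k L v) • f (apWord k L v + 1) := by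
  have hcover := sum_card_filter_notMem_add_one pairwiseDisjoint_plateaux
    (biUnion_plateaux_subset.trans (Finset.range_mono (Nat.sub_le L 1))) f (s := plateaux k L v)
  rw [sum_card_Ico_plateaux, Finset.card_range, card_plateaux] at hcover
  rw [← hcover]
  refine Finset.sum_congr rfl fun p hp => ?_
  rw [apWord_insertBlock_succ hk (Finset.mem_range.mp hp) hv]

end PlateauxInsertBlock

section PrependZero

variable {k L N p : ℕ} {v : ℕ → ℕ}

/-- The word `0v`, as in the definition of `lapStat`. -/
def prependZero (v : ℕ → ℕ) : ℕ → ℕ :=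
  fun i => if i = 0 then 0 else v (i - 1)

lemma prependZero_zero : prependZero v 0 = 0 := rfl

lemma prependZero_succ (i : ℕ) : prependZero v (i + 1) = v i := rfl

lemma prependZero_insertBlock :
    prependZero (insertBlock k N p v) = insertBlock k N (p + 1) (prependZero v) := by
  funext i
  rcases i with _ | i
  · rw [insertBlock_of_lt p.succ_pos, prependZero_zero, prependZero_zero]
  · rw [prependZero_succ]
    simp only [insertBlock, prependZero]
    grind

lemma apWord_prependZero :
    apWord k (L + 1) (prependZero v) =
      apWord k L v + if k ≤ L ∧ 0 < v 0 ∧ ∀ j < k, v j = v 0 then 1 else 0 := by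
  simp only [apWord, Finset.card_filter]
  rw [Finset.sum_range_succ']
  simp only [prependZero_succ, prependZero_zero, zero_add, add_right_comm _ 1,
    Nat.lt_iff_add_one_le, add_le_add_iff_right]

end PrependZero

section StirlingWords

variable {k n p : ℕ} {v : ℕ → ℕ}

/-- `v` is the word of a `k`-Stirling permutation of order `n`, in the encoding of `wordOf`: letters
`1, …, n` at the positions below `k * n` and the junk value `0` from there on. -/
structure IsStirlingWord (k n : ℕ) (v : ℕ → ℕ) : Prop where
  pos_iff : ∀ i, 0 < v i ↔ i < k * n
  le : ∀ i, v i ≤ n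
  ncard_eq : ∀ m, 1 ≤ m → m ≤ n → {i | v i = m}.ncard = k
  le_of_eq : ∀ i j l, i ≤ j → j ≤ l → v i = v l → v i ≤ v j

namespace IsStirlingWord

lemma ne_succ (hv : IsStirlingWord k n v) (i : ℕ) : v i ≠ n + 1 :=
  (Nat.lt_succ_of_le (hv.le i)).ne

protected lemma insertBlock (hv : IsStirlingWord k n v) (hp : p ≤ k * n) :
    IsStirlingWord k (n + 1) (insertBlock k (n + 1) p v) where
  pos_iff i := by
    rw [mul_add_one]
    by_cases hi : i ∈ Set.Ico p (p + k)
    · rw [insertBlock_of_mem hi]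
      have := hi.2
      omega
    · obtain ⟨a, rfl⟩ := mem_range_blockShift.mpr hi
      rw [insertBlock_blockShift, blockShift_lt_add_iff hp, hv.pos_iff]
  le i := insertBlock_le fun a => (hv.le a).trans n.le_succ
  ncard_eq m hm1 hmn := by
    rcases eq_or_ne m (n + 1) with rfl | hm
    · simp only [insertBlock_eq_iff hv.ne_succ, Set.ofPred_mem_eq]
      rw [← Finset.coe_Ico, Set.ncard_coe_finset, Nat.card_Ico, Nat.add_sub_cancel_left]
    · rw [ncard_insertBlock_eq hm]
      exact hv.ncard_eq m hm1 (by omega)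
  le_of_eq i j l hij hjl hil := by
    by_cases hj : j ∈ Set.Ico p (p + k)
    · rw [insertBlock_of_mem hj]
      exact insertBlock_le fun a => (hv.le a).trans n.le_succ
    · have hends : i ∈ Set.Ico p (p + k) ↔ l ∈ Set.Ico p (p + k) := by
        rw [← insertBlock_eq_iff hv.ne_succ, hil, insertBlock_eq_iff hv.ne_succ]
      have hi : i ∉ Set.Ico p (p + k) := fun hi =>
        hj ⟨hi.1.trans hij, hjl.trans_lt (hends.mp hi).2⟩
      obtain ⟨a, rfl⟩ := mem_range_blockShift.mpr hi
      obtain ⟨b, rfl⟩ := mem_range_blockShift.mpr hj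
      obtain ⟨c, rfl⟩ := mem_range_blockShift.mpr (hends.not.mp hi)
      simp only [insertBlock_blockShift, OrderEmbedding.le_iff_le] at hij hjl hil ⊢
      exact hv.le_of_eq a b c hij hjl hil

lemma exists_block (hk : 1 ≤ k) (hv : IsStirlingWord k (n + 1) v) :
    ∃ p ≤ k * n, ∀ i, v i = n + 1 ↔ i ∈ Set.Ico p (p + k) := by
  have hcard : {i | v i = n + 1}.ncard = k := hv.ncard_eq (n + 1) (by omega) le_rfl
  have hconn : {i | v i = n + 1}.OrdConnected := by
    refine ⟨fun i hi l hl j hj => (hv.le j).antisymm ?_⟩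
    exact hi.symm.le.trans (hv.le_of_eq i j l hj.1 hj.2 (hi.trans hl.symm))
  obtain ⟨p, hp⟩ := exists_eq_Ico_of_ordConnected hconn (by omega)
  rw [hcard] at hp
  have hblock (i : ℕ) : v i = n + 1 ↔ i ∈ Set.Ico p (p + k) := Set.ext_iff.mp hp i
  refine ⟨p, ?_, hblock⟩
  have hlast : p + k - 1 < k * (n + 1) := by
    rw [← hv.pos_iff, (hblock _).mpr ⟨by omega, by omega⟩]
    exact n.succ_pos
  rw [mul_add_one] at hlast
  omega

lemma comp_blockShift (hv : IsStirlingWord k (n + 1) v) (hp : p ≤ k * n)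
    (hblock : ∀ i, v i = n + 1 ↔ i ∈ Set.Ico p (p + k)) :
    IsStirlingWord k n (v ∘ blockShift k p) where
  pos_iff i := by
    rw [Function.comp_apply, hv.pos_iff, mul_add_one, blockShift_lt_add_iff hp]
  le i := Nat.le_of_lt_succ <| lt_of_le_of_ne (hv.le _) <|
    (hblock _).not.mpr blockShift_notMem_Ico
  ncard_eq m hm1 hmn := by
    rw [← ncard_insertBlock_eq (k := k) (p := p) (show m ≠ n + 1 by omega),
      insertBlock_comp_blockShift fun i hi => (hblock i).mpr hi]
    exact hv.ncard_eq m hm1 (by omega)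
  le_of_eq i j l hij hjl hil :=
    hv.le_of_eq _ _ _ ((blockShift k p).monotone hij) ((blockShift k p).monotone hjl) hil

lemma exists_insertBlock_eq (hk : 1 ≤ k) (hv : IsStirlingWord k (n + 1) v) :
    ∃ p ≤ k * n, ∃ u, IsStirlingWord k n u ∧ insertBlock k (n + 1) p u = v := by
  obtain ⟨p, hp, hblock⟩ := exists_block hk hv
  exact ⟨p, hp, _, hv.comp_blockShift hp hblock,
    insertBlock_comp_blockShift fun i hi => (hblock i).mpr hi⟩

lemma eq_and_eq_of_insertBlock_eq {p' : ℕ} {v' : ℕ → ℕ} (hk : 1 ≤ k) (hv : IsStirlingWord k n v)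
    (hv' : IsStirlingWord k n v')
    (h : insertBlock k (n + 1) p v = _root_.insertBlock k (n + 1) p' v') :
    v = v' ∧ p = p' := by
  have hblock (i : ℕ) : i ∈ Set.Ico p (p + k) ↔ i ∈ Set.Ico p' (p' + k) := by
    rw [← insertBlock_eq_iff hv.ne_succ, h, insertBlock_eq_iff hv'.ne_succ]
  have hpp' : p = p' := le_antisymm
    ((hblock p').mpr ⟨le_rfl, by omega⟩).1 ((hblock p).mp ⟨le_rfl, by omega⟩).1
  subst hpp'
  exact ⟨insertBlock_injective h, rfl⟩

end IsStirlingWord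

lemma wordOf_val (w : Fin (k * n) → Fin n) (i : Fin (k * n)) : wordOf k n w i = w i + 1 :=
  dif_pos i.2

lemma wordOf_of_le (w : Fin (k * n) → Fin n) {i : ℕ} (hi : k * n ≤ i) : wordOf k n w i = 0 :=
  dif_neg hi.not_gt

lemma wordOf_val_eq_iff {w : Fin (k * n) → Fin n} {i j : Fin (k * n)} :
    wordOf k n w i = wordOf k n w j ↔ w i = w j := by
  rw [wordOf_val, wordOf_val, Nat.add_right_cancel_iff, Fin.val_inj]

lemma wordOf_val_le_iff {w : Fin (k * n) → Fin n} {i j : Fin (k * n)} :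
    wordOf k n w i ≤ wordOf k n w j ↔ w i ≤ w j := by
  rw [wordOf_val, wordOf_val, Nat.add_le_add_iff_right, Fin.val_fin_le]

lemma wordOf_injective : Function.Injective (wordOf k n) := fun w w' h => by
  funext i
  have := congrFun h i
  rwa [wordOf_val, wordOf_val, Nat.add_right_cancel_iff, Fin.val_inj] at this

lemma wordOf_pos_iff (w : Fin (k * n) → Fin n) (i : ℕ) : 0 < wordOf k n w i ↔ i < k * n := by
  rcases lt_or_ge i (k * n) with hi | hi
  · simp only [wordOf_val w ⟨i, hi⟩, Nat.succ_pos, hi]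
  · simp only [wordOf_of_le w hi, lt_irrefl, hi.not_gt]

lemma wordOf_le (w : Fin (k * n) → Fin n) (i : ℕ) : wordOf k n w i ≤ n := by
  rcases lt_or_ge i (k * n) with hi | hi
  · rw [wordOf_val w ⟨i, hi⟩]
    exact (w ⟨i, hi⟩).2
  · rw [wordOf_of_le w hi]
    exact n.zero_le

lemma ncard_wordOf_eq (w : Fin (k * n) → Fin n) (m : Fin n) :
    {i | wordOf k n w i = m + 1}.ncard = #{i | w i = m} := by
  have himage : {i | wordOf k n w i = m + 1} =
      Fin.val '' (({i | w i = m} : Finset (Fin (k * n))) : Set (Fin (k * n))) := by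
    ext i
    simp only [Set.mem_ofPred_eq, Set.mem_image, Finset.coe_filter, Finset.mem_univ, true_and]
    constructor
    · intro h
      have hi : i < k * n := (wordOf_pos_iff w i).mp (by omega)
      refine ⟨⟨i, hi⟩, ?_, rfl⟩
      rwa [wordOf_val w ⟨i, hi⟩, Nat.add_right_cancel_iff, Fin.val_inj] at h
    · rintro ⟨i, rfl, rfl⟩
      exact wordOf_val w i
  rw [himage, Set.ncard_image_of_injective _ Fin.val_injective, Set.ncard_coe_finset]

lemma isStirlingWord_wordOf_iff {w : Fin (k * n) → Fin n} :
    IsStirlingWord k n (wordOf k n w) ↔ IsKStirling k n w := by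
  constructor
  · refine fun h => ⟨fun m => ?_, fun i j l hij hjl hil => ?_⟩
    · rw [← ncard_wordOf_eq]
      exact h.ncard_eq _ (by omega) (by omega)
    · rw [← wordOf_val_le_iff]
      exact h.le_of_eq i j l hij hjl (wordOf_val_eq_iff.mpr hil)
  · rintro ⟨hcount, hle⟩
    refine ⟨wordOf_pos_iff w, wordOf_le w, fun m hm1 hmn => ?_, fun i j l hij hjl hil => ?_⟩
    · have hncard := ncard_wordOf_eq w ⟨m - 1, by omega⟩
      rwa [hcount, Nat.sub_add_cancel hm1] at hncard
    · rcases lt_or_ge l (k * n) with hl | hl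
      · lift i to Fin (k * n) using by omega
        lift j to Fin (k * n) using by omega
        lift l to Fin (k * n) using hl
        exact wordOf_val_le_iff.mpr (hle i j l hij hjl (wordOf_val_eq_iff.mp hil))
      · rw [hil, wordOf_of_le w hl]
        exact Nat.zero_le _

lemma IsStirlingWord.exists_wordOf_eq (hv : IsStirlingWord k n v) : ∃ w, wordOf k n w = v := by
  have hpos (i : Fin (k * n)) : 0 < v i := (hv.pos_iff i).mpr i.2
  have hle := hv.le
  refine ⟨fun i => ⟨v i - 1, by have := hpos i; have := hle i; omega⟩, funext fun i => ?_⟩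
  rcases lt_or_ge i (k * n) with hi | hi
  · lift i to Fin (k * n) using hi
    rw [wordOf_val]
    exact Nat.sub_add_cancel (hpos i)
  · rw [wordOf_of_le _ hi]
    exact (Nat.eq_zero_of_not_pos ((hv.pos_iff i).not.mpr hi.not_gt)).symm

/-- The words of the `k`-Stirling permutations of order `n`. -/
def stirlingWords (k n : ℕ) : Finset (ℕ → ℕ) :=
  ({w | IsKStirling k n w} : Finset (Fin (k * n) → Fin n)).image (wordOf k n)

lemma mem_stirlingWords : v ∈ stirlingWords k n ↔ IsStirlingWord k n v := by
  simp only [stirlingWords, Finset.mem_image, Finset.mem_filter, Finset.mem_univ, true_and,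
    ← isStirlingWord_wordOf_iff]
  refine ⟨?_, fun hv => ?_⟩
  · rintro ⟨w, hw, rfl⟩
    exact hw
  · obtain ⟨w, rfl⟩ := hv.exists_wordOf_eq
    exact ⟨w, hv, rfl⟩

section Sums

variable {M : Type*} [AddCommMonoid M]

lemma sum_stirlingWords (g : (ℕ → ℕ) → M) :
    ∑ v ∈ stirlingWords k n, g v =
      ∑ w : {w : Fin (k * n) → Fin n // IsKStirling k n w}, g (wordOf k n w) := by
  rw [stirlingWords, Finset.sum_image wordOf_injective.injOn,
    Finset.sum_subtype (p := IsKStirling k n) _ (fun w => by simp) fun w => g (wordOf k n w)]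

lemma sum_stirlingWords_succ (hk : 1 ≤ k) (g : (ℕ → ℕ) → M) :
    ∑ v ∈ stirlingWords k (n + 1), g v =
      ∑ v ∈ stirlingWords k n, ∑ p ∈ Finset.range (k * n + 1), g (insertBlock k (n + 1) p v) := by
  rw [← Finset.sum_product']
  symm
  refine Finset.sum_bij (fun q _ => insertBlock k (n + 1) q.2 q.1) ?_ ?_ ?_ fun _ _ => rfl
  · intro q hq
    rw [Finset.mem_product, mem_stirlingWords, Finset.mem_range_succ_iff] at hq
    exact mem_stirlingWords.mpr (hq.1.insertBlock hq.2)
  · intro q hq q' hq' h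
    rw [Finset.mem_product, mem_stirlingWords] at hq hq'
    exact Prod.ext_iff.mpr (hq.1.eq_and_eq_of_insertBlock_eq hk hq'.1 h)
  · intro v hv
    obtain ⟨p, hp, u, hu, rfl⟩ := (mem_stirlingWords.mp hv).exists_insertBlock_eq hk
    exact ⟨(u, p), Finset.mem_product.mpr
      ⟨mem_stirlingWords.mpr hu, Finset.mem_range_succ_iff.mpr hp⟩, rfl⟩

lemma sum_apWord_insertBlock {N : ℕ} (hk : 1 ≤ k) {L : ℕ} (hv : ∀ a < L, v a < N) (f : ℕ → M) :
    ∑ p ∈ Finset.range (L + 1), f (apWord k (L + k) (insertBlock k N p v)) =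
      (k * apWord k L v + 1) • f (apWord k L v) +
        (L - k * apWord k L v) • f (apWord k L v + 1) := by
  rw [Finset.sum_range_succ', sum_apWord_insertBlock_succ hk hv, apWord_insertBlock_zero hk hv,
    add_right_comm, succ_nsmul]

lemma sum_apWord_prependZero_insertBlock {N : ℕ} (hk : 1 ≤ k) {L : ℕ} (hN : 0 < N)
    (hv : ∀ a < L, v a < N) (f : ℕ → M) :
    ∑ p ∈ Finset.range (L + 1), f (apWord k (L + k + 1) (prependZero (insertBlock k N p v))) =
      (k * apWord k (L + 1) (prependZero v)) • f (apWord k (L + 1) (prependZero v)) +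
        (L + 1 - k * apWord k (L + 1) (prependZero v)) •
          f (apWord k (L + 1) (prependZero v) + 1) := by
  simp only [prependZero_insertBlock, add_right_comm L k 1]
  refine sum_apWord_insertBlock_succ hk (fun a ha => ?_) f
  rcases a with _ | a
  · exact hN
  · exact hv a (by omega)

theorem sum_apWord_prependZero_eq_sum_sub_apWord (hk : 1 ≤ k) (f : ℕ → M) :
    ∑ v ∈ stirlingWords k n, f (apWord k (k * n + 1) (prependZero v)) =
      ∑ v ∈ stirlingWords k n, f (n - apWord k (k * n) v) := by
  induction n generalizing f with
  | zero =>
    refine Finset.sum_congr rfl fun v _ => ?_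
    have hlap : k * apWord k 1 (prependZero v) ≤ 0 := mul_apWord_le
    have : apWord k 1 (prependZero v) = 0 := by
      simpa [show k ≠ 0 by omega] using hlap
    rw [mul_zero, zero_add, this, Nat.zero_sub]
  | succ n ih =>
    have hlt : ∀ v ∈ stirlingWords k n, ∀ a < k * n, v a < n + 1 := fun v hv a _ =>
      Nat.lt_succ_of_le ((mem_stirlingWords.mp hv).le a)
    rw [sum_stirlingWords_succ hk, sum_stirlingWords_succ hk, mul_add_one,
      Finset.sum_congr rfl fun v hv =>
        sum_apWord_prependZero_insertBlock hk n.succ_pos (hlt v hv) f,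
      Finset.sum_congr rfl fun v hv =>
        sum_apWord_insertBlock hk (hlt v hv) fun j => f (n + 1 - j),
      ih fun j => (k * j) • f j + (k * n + 1 - k * j) • f (j + 1)]
    refine Finset.sum_congr rfl fun v _ => ?_
    have hle : apWord k (k * n) v ≤ n := (apWord_le_sub_one hk).trans n.pred_le
    generalize apWord k (k * n) v = j at hle
    have hkj : k * j ≤ k * n := Nat.mul_le_mul_left k hle
    rw [Nat.mul_sub, show n + 1 - j = n - j + 1 by omega, show n + 1 - (j + 1) = n - j by omega,
      show k * n + 1 - (k * n - k * j) = k * j + 1 by omega, add_comm]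

end Sums

end StirlingWords

section Statistics

variable {k n : ℕ}

lemma lapStat_eq (hn : 1 ≤ n) (hk : 1 ≤ k) (w : Fin (k * n) → Fin n) :
    lapStat k n w = apStat k n w + if FirstPlateau k n w then 1 else 0 := by
  have hkn : k ≤ k * n := Nat.le_mul_of_pos_right k hn
  have hfirst : (k ≤ k * n ∧ 0 < wordOf k n w 0 ∧ ∀ j < k, wordOf k n w j = wordOf k n w 0) ↔
      FirstPlateau k n w := by
    rw [wordOf_pos_iff]
    refine ⟨fun ⟨_, _, h⟩ i hik _ => wordOf_val_eq_iff.mp (h i hik), fun h => ?_⟩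
    exact ⟨hkn, by omega, fun j hj => wordOf_val_eq_iff.mpr (h ⟨j, by omega⟩ hj (by omega))⟩
  refine apWord_prependZero.trans ?_
  simp only [hfirst, apStat]

lemma apStat_le (hk : 1 ≤ k) (w : Fin (k * n) → Fin n) : apStat k n w ≤ n - 1 :=
  apWord_le_sub_one hk

theorem sum_lapStat_eq_sum_sub_apStat {M : Type*} [AddCommMonoid M] (hk : 1 ≤ k) (f : ℕ → M) :
    ∑ w : {w : Fin (k * n) → Fin n // IsKStirling k n w}, f (lapStat k n w) =
      ∑ w : {w : Fin (k * n) → Fin n // IsKStirling k n w}, f (n - apStat k n w) := by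
  have h := sum_apWord_prependZero_eq_sum_sub_apWord (n := n) hk f
  rwa [sum_stirlingWords, sum_stirlingWords] at h

end Statistics

section Reflect

variable {R : Type*} {m : ℕ}

lemma reflect_sum_X_pow [Semiring R] {ι : Type*} (s : Finset ι) {e : ι → ℕ}
    (he : ∀ i ∈ s, e i ≤ m) :
    reflect m (∑ i ∈ s, (X : R[X]) ^ e i) = ∑ i ∈ s, X ^ (m - e i) := by
  induction s using Finset.cons_induction with
  | empty => simp only [Finset.sum_empty, reflect_zero]
  | cons i s hi ih =>
    rw [Finset.sum_cons, Finset.sum_cons, reflect_add, reflect_monomial,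
      revAt_le (he i (Finset.mem_cons_self i s)), ih fun j hj => he j (Finset.mem_cons_of_mem hj)]

lemma reflect_succ_of_reflect_eq [Semiring R] {a : R[X]} (hdeg : a.natDegree ≤ m)
    (ha : reflect m a = a) : reflect (m + 1) a = X * a := by
  have h := reflect_mul (1 : R[X]) a (F := 1) (natDegree_one.trans_le zero_le_one) hdeg
  rwa [one_mul, reflect_one, pow_one, ha, add_comm] at h

lemma reflect_X_mul_of_reflect_eq [Semiring R] {b : R[X]} (hdeg : b.natDegree ≤ m)
    (hb : reflect m b = b) : reflect (m + 2) (X * b) = X * b := by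
  have h := reflect_mul X b (F := 2) (natDegree_X_le.trans one_le_two) hdeg
  have hX : reflect 2 (X : R[X]) = X := by
    simpa only [pow_one, revAt_le one_le_two, Nat.reduceSub] using reflect_monomial (R := R) 2 1
  rwa [hb, hX, add_comm] at h

lemma reflect_add_X_mul_of_reflect_eq [Semiring R] {n : ℕ} (hn : 1 ≤ n) {a b : R[X]}
    (hdeg : (a + X * b).natDegree ≤ n - 1) (ha1 : a.natDegree ≤ n - 1)
    (ha2 : reflect (n - 1) a = a) (hb1 : b.natDegree ≤ n - 2) (hb2 : reflect (n - 2) b = b) :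
    reflect n (a + X * b) = X * a + X * b := by
  have hXa : reflect n a = X * a := by
    have := reflect_succ_of_reflect_eq ha1 ha2
    rwa [Nat.sub_add_cancel hn] at this
  have hXb : reflect n (X * b) = X * b := by
    rcases hn.eq_or_lt with rfl | hn
    · have hcoeff : b.coeff 0 = 0 := by
        have hcoeff_one := coeff_eq_zero_of_natDegree_lt (hdeg.trans_lt one_pos)
        rw [coeff_add, coeff_eq_zero_of_natDegree_lt (ha1.trans_lt one_pos), zero_add]
          at hcoeff_one
        exact (coeff_X_mul b 0).symm.trans hcoeff_one
      rw [eq_C_of_natDegree_le_zero hb1, hcoeff, C_0, mul_zero, reflect_zero]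
    · have := reflect_X_mul_of_reflect_eq hb1 hb2
      rwa [Nat.sub_add_cancel hn] at this
  rw [reflect_add, hXa, hXb]

lemma eq_and_eq_of_add_eq_add [Ring R] {a c p q : R[X]} (h : a + c = p + q)
    (hX : X * a + c = X * p + q) : a = p ∧ c = q := by
  have hap : a = p := (monic_X_sub_C 1).isRegular.left <| by
    have := congrArg₂ (· - ·) hX h
    simp only [map_one, sub_mul, one_mul]
    simpa only [add_sub_add_right_eq_sub] using this
  exact ⟨hap, add_left_cancel (hap ▸ h)⟩

end Reflect

section Decomposition

variable {R : Type*} {n k : ℕ}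

lemma natDegree_sum_X_pow_apStat_le [Semiring R] (hk : 1 ≤ k) :
    (∑ w : {w : Fin (k * n) → Fin n // IsKStirling k n w},
      (X : R[X]) ^ apStat k n w.1).natDegree ≤ n - 1 :=
  natDegree_sum_le_of_forall_le _ _ fun w _ => (natDegree_X_pow_le _).trans (apStat_le hk w.1)

lemma reflect_sum_X_pow_apStat [Semiring R] (hn : 1 ≤ n) (hk : 1 ≤ k) :
    reflect n (∑ w : {w : Fin (k * n) → Fin n // IsKStirling k n w},
        (X : R[X]) ^ apStat k n w.1) =
      X * (∑ w : {w : Fin (k * n) → Fin n // IsKStirling k n w ∧ FirstPlateau k n w},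
          X ^ apStat k n w.1) +
        ∑ w : {w : Fin (k * n) → Fin n // IsKStirling k n w ∧ ¬ FirstPlateau k n w},
          X ^ apStat k n w.1 := by
  rw [reflect_sum_X_pow _ fun w _ => (apStat_le hk w.1).trans n.pred_le,
    ← sum_lapStat_eq_sum_sub_apStat hk (X ^ ·),
    ← sum_subtype_and_add_sum_subtype_and_not (IsKStirling k n) (FirstPlateau k n)
      fun w => (X : R[X]) ^ lapStat k n w, Finset.mul_sum]
  congr 1 <;> refine Finset.sum_congr rfl fun w _ => ?_
  · rw [lapStat_eq hn hk, if_pos w.2.2, pow_succ']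
  · rw [lapStat_eq hn hk, if_neg w.2.2, add_zero]

theorem symmetric_decomposition_interpretation_general [Ring R] (hn : 1 ≤ n) (hk : 1 ≤ k)
    {a b : R[X]}
    (hdec : (∑ w : {w : Fin (k * n) → Fin n // IsKStirling k n w},
        (X : R[X]) ^ apStat k n w.1) = a + X * b)
    (ha1 : a.natDegree ≤ n - 1) (ha2 : a.reflect (n - 1) = a)
    (hb1 : b.natDegree ≤ n - 2) (hb2 : b.reflect (n - 2) = b) :
    a = (∑ w : {w : Fin (k * n) → Fin n // IsKStirling k n w ∧ FirstPlateau k n w},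
        (X : R[X]) ^ apStat k n w.1) ∧
    X * b = (∑ w : {w : Fin (k * n) → Fin n // IsKStirling k n w ∧ ¬ FirstPlateau k n w},
        (X : R[X]) ^ apStat k n w.1) := by
  have hdeg : (a + X * b).natDegree ≤ n - 1 := hdec ▸ natDegree_sum_X_pow_apStat_le hk
  refine eq_and_eq_of_add_eq_add ?_ ?_
  · rw [← hdec]
    exact (sum_subtype_and_add_sum_subtype_and_not (IsKStirling k n) (FirstPlateau k n)
      fun w => (X : R[X]) ^ apStat k n w).symm
  · rw [← reflect_add_X_mul_of_reflect_eq hn hdeg ha1 ha2 hb1 hb2, ← hdec,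
      reflect_sum_X_pow_apStat hn hk]

end Decomposition

/-- Combinatorial interpretation of the symmetric decomposition of
`A_n^{(k)}(x) = Σ_{π ∈ Q_n(k)} x^{ap(π)}` (Ma–Ma–Yeh–Yeh): if
`A_n^{(k)} = a + x·b` with `a` palindromic of degree at most `n-1` and `b` palindromic
of degree at most `n-2`, then `a = Σ_{π ∈ Q̄_n(k)} x^{ap(π)}` and
`x·b = Σ_{π ∈ Q̂_n(k)} x^{ap(π)}`. -/
theorem symmetric_decomposition_interpretation (n k : ℕ) (hn : 1 ≤ n) (hk : 1 ≤ k)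
    (a b : Polynomial ℝ)
    (hdec : (∑ w : {w : Fin (k * n) → Fin n // IsKStirling k n w},
        (X : Polynomial ℝ) ^ apStat k n w.1) = a + X * b)
    (ha1 : a.natDegree ≤ n - 1) (ha2 : a.reflect (n - 1) = a)
    (hb1 : b.natDegree ≤ n - 2) (hb2 : b.reflect (n - 2) = b) :
    a = (∑ w : {w : Fin (k * n) → Fin n // IsKStirling k n w ∧ FirstPlateau k n w},
        (X : Polynomial ℝ) ^ apStat k n w.1) ∧
    X * b = (∑ w : {w : Fin (k * n) → Fin n // IsKStirling k n w ∧ ¬ FirstPlateau k n w},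
        (X : Polynomial ℝ) ^ apStat k n w.1) :=
  symmetric_decomposition_interpretation_general hn hk hdec ha1 ha2 hb1 hb2

end
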